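/- Under the Setup, if P is θ-ergodic and T is uniquely ergodic, i.e. I_P(E) consists of exactly one measure, then T has the small boundary property: for every x ∈ X and every open set U containing x there is an open set V with x ∈ V ⊆ U whose topological boundary ∂V is T-small. -/

import Mathlib

open MeasureTheory Set Filter Topology
open scoped ENNReal

section Defs

variable {Ω X Y : Type*}

/-- The fiber of a set `E ⊆ Ω × X` over `ω`. -/
def fiber (E : Set (Ω × X)) (ω : Ω) : Set X := {x | (ω, x) ∈ E}

/-- The iterates `T^n_ω = T_{θ^{n-1}ω} ∘ ⋯ ∘ T_ω` of a bundle RDS. -/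
def itr (T : Ω → X → X) (θ : Ω → Ω) : ℕ → Ω → X → X
  | 0, _ => id
  | n + 1, ω => itr T θ n (θ ω) ∘ T ω

/-- Two families of sets with common index set are combinatorially equivalent if
the corresponding sub-intersections are simultaneously nonempty. -/
def CombEquiv {ι : Type*} (A B : ι → Set Y) : Prop :=
  ∀ J : Set ι, (⋂ i ∈ J, A i).Nonempty ↔ (⋂ i ∈ J, B i).Nonempty

section Top

variable [TopologicalSpace X] [TopologicalSpace Y]

/-- A family of open sets covering the whole space. -/
def IsOpenCover {ι : Type*} (U : ι → Set X) : Prop :=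
  (∀ i, IsOpen (U i)) ∧ (⋃ i, U i) = univ

/-- A family of relatively open subsets of `K` covering `K`. -/
def IsOpenCoverOn (K : Set X) {ι : Type*} (U : ι → Set X) : Prop :=
  (∀ i, ∃ V : Set X, IsOpen V ∧ U i = V ∩ K) ∧ K ⊆ ⋃ i, U i

/-- `1 + ord`: the maximal multiplicity `sup_{x ∈ K} Σ_i 1_{U i}(x)` of the family `U` on `K`. -/
noncomputable def multOn (K : Set X) {ι : Type*} [Fintype ι] (U : ι → Set X) : ℕ :=
  sSup {m | ∃ x ∈ K, m = Nat.card {i // x ∈ U i}}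

/-- `ord(U) = -1 + sup_{x ∈ K} Σ_i 1_{U i}(x)` (as a truncated natural number). -/
noncomputable def ordOn (K : Set X) {ι : Type*} [Fintype ι] (U : ι → Set X) : ℕ :=
  multOn K U - 1

/-- `V` refines `U` if every member of `V` is contained in some member of `U`. -/
def Refines {ι κ : Type*} (V : κ → Set X) (U : ι → Set X) : Prop :=
  ∀ j, ∃ i, V j ⊆ U i

/-- `D(U) = min { ord(V) : V a finite relatively open cover of K refining U }`. -/
noncomputable def DOn (K : Set X) {ι : Type*} [Fintype ι] (U : ι → Set X) : ℕ :=
  sInf {q | ∃ (m : ℕ) (V : Fin m → Set X),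
    IsOpenCoverOn K V ∧ Refines V U ∧ ordOn K V = q}

/-- `f : X → Y` is `U`-compatible if some finite open cover of `Y` pulls back to
a refinement of `U`. -/
def Compatible {ι : Type*} (U : ι → Set X) (f : X → Y) : Prop :=
  ∃ (m : ℕ) (W : Fin m → Set Y), IsOpenCover W ∧ Refines (fun j => f ⁻¹' (W j)) U

/-- The covering dimension `dim Y = sup { D(V) : V a finite open cover of Y }`. -/
noncomputable def covDim (Z : Type*) [TopologicalSpace Z] : ℕ∞ :=
  ⨆ (m : ℕ) (V : Fin m → Set Z) (_ : IsOpenCover V), (DOn (univ : Set Z) V : ℕ∞)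

/-- The dynamical cover `α_0^{n-1}(ω|E) = ⋁_{i=0}^{n-1} (T^i_ω)⁻¹ α(θ^i ω|E)` of the fiber
`E_ω`, indexed by `Fin n → ι`. -/
def dynCover (T : Ω → X → X) (θ : Ω → Ω) (E : Set (Ω × X)) {ι : Type*}
    (U : ι → Set X) (n : ℕ) (ω : Ω) : (Fin n → ι) → Set X :=
  fun j => fiber E ω ∩
    ⋂ i : Fin n, (itr T θ (i : ℕ) ω) ⁻¹' (U (j i) ∩ fiber E (θ^[(i : ℕ)] ω))

end Top

/-- `Σ_{i=0}^{n-1} 1_A (T^i_ω x)`: the number of times the orbit of `x` up to time `n`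
visits `A`. -/
noncomputable def orbCount (T : Ω → X → X) (θ : Ω → Ω) (A : Set X)
    (n : ℕ) (ω : Ω) (x : X) : ℕ :=
  Nat.card {i : Fin n // itr T θ (i : ℕ) ω x ∈ A}

/-- `b_n(ω) = sup_{x ∈ E_ω} Σ_{i=0}^{n-1} 1_A (T^i_ω x)`. -/
noncomputable def bsup (T : Ω → X → X) (θ : Ω → Ω) (E : Set (Ω × X)) (A : Set X)
    (n : ℕ) (ω : Ω) : ℕ :=
  sSup {m | ∃ x ∈ fiber E ω, m = orbCount T θ A n ω x}

/-- The `ω`-orbit capacity `ocap^ω(A) = lim_{n→∞} (1/n) b_n(ω)` (as a `limsup`). -/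
noncomputable def ocap (T : Ω → X → X) (θ : Ω → Ω) (E : Set (Ω × X)) (A : Set X)
    (ω : Ω) : ℝ :=
  Filter.atTop.limsup (fun n : ℕ => (bsup T θ E A n ω : ℝ) / n)

section Metric

variable [PseudoMetricSpace X]

/-- The Bowen-type metric `d^ω_{ε,n}(x,y) = max_{0 ≤ k < n} d(T^k_ω x, T^k_ω y)/ε`. -/
noncomputable def dBowen (T : Ω → X → X) (θ : Ω → Ω) (ε : ℝ) (n : ℕ) (ω : Ω)
    (x y : X) : ℝ :=
  ⨆ k : Fin n, dist (itr T θ (k : ℕ) ω x) (itr T θ (k : ℕ) ω y) / ε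

/-- The diameter of a set with respect to a (not necessarily standard) metric `ρ`. -/
noncomputable def diamIn (ρ : X → X → ℝ) (A : Set X) : ℝ :=
  sSup {r | ∃ x ∈ A, ∃ y ∈ A, r = ρ x y}

/-- `cov(ω,ε,n)`: the minimal cardinality of a cover of `E_ω` by sets of
`d^ω_{ε,n}`-diameter strictly less than 1. -/
noncomputable def covN (T : Ω → X → X) (θ : Ω → Ω) (E : Set (Ω × X))
    (ε : ℝ) (n : ℕ) (ω : Ω) : ℕ :=
  sInf {m | ∃ A : Fin m → Set X, fiber E ω ⊆ (⋃ j, A j) ∧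
    ∀ j, diamIn (dBowen T θ ε n ω) (A j) < 1}

/-- `sep(ω,ε,n)`: the maximal cardinality of a subset of `E_ω` whose distinct points are
at `d^ω_{ε,n}`-distance at least 1. -/
noncomputable def sepN (T : Ω → X → X) (θ : Ω → Ω) (E : Set (Ω × X))
    (ε : ℝ) (n : ℕ) (ω : Ω) : ℕ :=
  sSup {m | ∃ F : Finset X, (F : Set X) ⊆ fiber E ω ∧ F.card = m ∧
    ∀ x ∈ F, ∀ y ∈ F, x ≠ y → 1 ≤ dBowen T θ ε n ω x y}

/-- `S'(ω,ε) = limsup_{n→∞} (1/n) log sep(ω,ε,n)`. -/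
noncomputable def Ssep (T : Ω → X → X) (θ : Ω → Ω) (E : Set (Ω × X))
    (ω : Ω) (ε : ℝ) : ℝ :=
  Filter.atTop.limsup (fun n : ℕ => Real.log (sepN T θ E ε n ω) / n)

/-- `S(ω,ε) = lim_{n→∞} (1/n) log cov(ω,ε,n)` (the limit exists by subadditivity and
equals the `limsup`). -/
noncomputable def Scov (T : Ω → X → X) (θ : Ω → Ω) (E : Set (Ω × X))
    (ω : Ω) (ε : ℝ) : ℝ :=
  Filter.atTop.limsup (fun n : ℕ => Real.log (covN T θ E ε n ω) / n)

/-- The fiberwise metric mean dimension computed from separated sets: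
`liminf_{1 > ε → 0⁺} S'(ω,ε)/(-log ε)`. -/
noncomputable def mdimMfibSep (T : Ω → X → X) (θ : Ω → Ω) (E : Set (Ω × X)) (ω : Ω) : ℝ :=
  Filter.liminf (fun ε => Ssep T θ E ω ε / (-Real.log ε)) (nhdsWithin 0 (Ioo (0:ℝ) 1))

/-- The fiberwise metric mean dimension `mdim_M(T,ω) = liminf_{1 > ε → 0⁺} S(ω,ε)/(-log ε)`. -/
noncomputable def mdimMfibCov (T : Ω → X → X) (θ : Ω → Ω) (E : Set (Ω × X)) (ω : Ω) : ℝ :=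
  Filter.liminf (fun ε => Scov T θ E ω ε / (-Real.log ε)) (nhdsWithin 0 (Ioo (0:ℝ) 1))

/-- The topological entropy `h_top(T) = ∫_Ω sup_{0<ε<1} S'(ω,ε) dP(ω)`. -/
noncomputable def htop (T : Ω → X → X) (θ : Ω → Ω) (E : Set (Ω × X))
    {mΩ : MeasurableSpace Ω} (P : Measure Ω) : ℝ≥0∞ :=
  ∫⁻ ω, ⨆ ε : Ioo (0:ℝ) 1, ENNReal.ofReal (Ssep T θ E ω (ε : ℝ)) ∂P

end Metric

section Mdim

variable [TopologicalSpace X] {mΩ : MeasurableSpace Ω}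

/-- The mean topological dimension with respect to the cover `U`:
`mdim(T,α) = lim_{n→∞} (1/n) ∫_Ω D(α_0^{n-1}(ω|E)) dP(ω)` (the limit exists by
subadditivity and equals the `liminf`). -/
noncomputable def mdimCov (P : Measure Ω) (T : Ω → X → X) (θ : Ω → Ω) (E : Set (Ω × X))
    {ι : Type*} [Fintype ι] (U : ι → Set X) : ℝ≥0∞ :=
  Filter.atTop.liminf (fun n : ℕ =>
    (∫⁻ ω, (DOn (fiber E ω) (dynCover T θ E U n ω) : ℝ≥0∞) ∂P) / (n : ℝ≥0∞))

/-- The mean topological dimension `mdim(T) = sup_α mdim(T,α)` over finite open covers. -/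
noncomputable def mdim (P : Measure Ω) (T : Ω → X → X) (θ : Ω → Ω)
    (E : Set (Ω × X)) : ℝ≥0∞ :=
  ⨆ (m : ℕ) (U : Fin m → Set X) (_ : IsOpenCover U), mdimCov P T θ E U

end Mdim

end Defs


/-!
For a closed set `B`, consider the functions `u` on the base which bound the indicator function of
`Ω × B` from above up to a bounded coboundary on almost every fiber, and call the infimum of their
integrals the upper mean of `B`. It is the value at the indicator function of a sublinear functional
on bounded functions, so Hahn-Banach provides an invariant mean attaining it. Regularizing this mean
along the fibers gives an honest measure, because its marginal is `P` and the fibers are compact;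
the result is an invariant measure `μ` on `E` whose value on `Ω × B` is at least the upper mean.

Hence, if every invariant measure vanishes on `Ω × B`, then there are such `u` of arbitrarily small
integral. Their Birkhoff sums bound the number of visits to `B` up to a constant, and a maximal
ergodic inequality shows that the orbit capacity of `B` vanishes almost surely. When the invariant
measure is unique, every point has arbitrarily small balls whose frontiers are null for it.
-/

section Projection

variable {Z : Type*} [MeasurableSpace Z] {m : Measure Z} [IsFiniteMeasure m]

theorem exists_measure_image_le_measure_image_inter_add {α : Type*} (f : α → Z) (D : Set α)
    (c : α → ℕ) {δ : ℝ≥0∞} (hδ : δ ≠ 0) :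
    ∃ N : ℕ, m (f '' D) ≤ m (f '' (D ∩ {x | c x ≤ N})) + δ := by
  have hmono : Monotone fun N : ℕ => f '' (D ∩ {x | c x ≤ N}) := fun a b hab =>
    image_mono (inter_subset_inter_right _ fun x hx => le_trans hx hab)
  have hunion : ⋃ N : ℕ, f '' (D ∩ {x | c x ≤ N}) = f '' D := by
    rw [← image_iUnion, ← inter_iUnion, inter_eq_left.2 fun x _ => mem_iUnion.2 ⟨c x, by simp⟩]
  have hlim := (tendsto_measure_iUnion_atTop (μ := m) hmono).add_const δ
  rw [hunion] at hlim
  obtain ⟨N, hN⟩ := (hlim.eventually_const_lt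
    (ENNReal.lt_add_right (measure_ne_top m (f '' D)) hδ)).exists
  exact ⟨N, hN.le⟩

theorem exists_measure_range_le_measure_image_forall_lt_le (f : (ℕ → ℕ) → Z) {ε : ℝ≥0∞}
    (hε : ε ≠ 0) :
    ∃ n : ℕ → ℕ, ∀ k, m (range f) ≤ m (f '' {x | ∀ i < k, x i ≤ n i}) + ε := by
  obtain ⟨δ, hδ, hδε⟩ := ENNReal.exists_pos_sum_of_countable' hε ℕ
  choose N hN using fun (D : Set (ℕ → ℕ)) (k : ℕ) =>
    exists_measure_image_le_measure_image_inter_add (m := m) f D (fun x => x k) (hδ k).ne'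
  let D : ℕ → Set (ℕ → ℕ) := fun k => Nat.rec univ (fun k D => D ∩ {x | x k ≤ N D k}) k
  have hD : ∀ k, D k = {x | ∀ i < k, x i ≤ N (D i) i} := by
    intro k
    induction k with
    | zero => simp [D]
    | succ k ih =>
      change D k ∩ {x | x k ≤ N (D k) k} = _
      ext x
      simp only [Nat.forall_lt_succ_right, mem_ofPred_eq, mem_inter_iff]
      exact and_congr_left fun _ => by rw [ih, mem_ofPred_eq]
  have hsum : ∀ k, m (range f) ≤ m (f '' D k) + ∑ i ∈ Finset.range k, δ i := by
    intro k
    induction k with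
    | zero => simp [D]
    | succ k ih =>
      refine ih.trans ?_
      rw [Finset.sum_range_succ, add_comm _ (δ k), ← add_assoc]
      gcongr
      exact hN _ _
  refine ⟨fun i => N (D i) i, fun k => ?_⟩
  rw [← hD k]
  exact (hsum k).trans (by gcongr; exact (ENNReal.sum_le_tsum _).trans hδε.le)

theorem isCompact_Iic_pi_nat {ι : Type*} (n : ι → ℕ) : IsCompact (Iic n) := by
  rw [← pi_univ_Iic]
  exact isCompact_univ_pi fun i => (finite_Iic (n i)).isCompact

theorem exists_forall_lt_le_subset_of_isOpen {n : ℕ → ℕ} {V : Set (ℕ → ℕ)} (hV : IsOpen V)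
    (hnV : Iic n ⊆ V) : ∃ k, {x | ∀ i < k, x i ≤ n i} ⊆ V := by
  by_contra! hcon
  choose x hxn hxV using fun k => not_subset.1 (hcon k)
  obtain ⟨y, hy, φ, hφ, hlim⟩ := (isCompact_Iic_pi_nat n).tendsto_subseq fun k =>
    (inf_le_right : x k ⊓ n ≤ n)
  have hxlim : Tendsto (x ∘ φ) atTop (𝓝 y) := by
    rw [tendsto_pi_nhds] at hlim ⊢
    refine fun i => (hlim i).congr' ?_
    filter_upwards [eventually_gt_atTop i] with j hj
    exact min_eq_left (hxn (φ j) i (hj.trans_le (hφ.id_le j)))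
  obtain ⟨j, hj⟩ := (hxlim.eventually (hV.mem_nhds (hnV hy))).exists
  exact hxV _ hj

theorem exists_isCompact_measure_range_le [TopologicalSpace Z] [m.OuterRegular]
    {f : (ℕ → ℕ) → Z} (hf : Continuous f) {ε : ℝ≥0∞} (hε : ε ≠ 0) :
    ∃ K ⊆ range f, IsCompact K ∧ m (range f) ≤ m K + ε := by
  obtain ⟨n, hn⟩ := exists_measure_range_le_measure_image_forall_lt_le (m := m) f hε
  refine ⟨f '' Iic n, image_subset_range _ _, (isCompact_Iic_pi_nat n).image hf, ?_⟩
  rw [(f '' Iic n).measure_eq_iInf_isOpen m]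
  simp_rw [ENNReal.iInf_add]
  refine le_iInf fun U => le_iInf fun hU => le_iInf fun hUo => ?_
  obtain ⟨k, hk⟩ := exists_forall_lt_le_subset_of_isOpen (hUo.preimage hf) (image_subset_iff.1 hU)
  refine (hn k).trans ?_
  gcongr
  exact image_subset_iff.2 hk

theorem nullMeasurableSet_of_analyticSet [TopologicalSpace Z] [T2Space Z]
    [OpensMeasurableSpace Z] [m.OuterRegular] {A : Set Z} (hA : AnalyticSet A) :
    NullMeasurableSet A m := by
  rw [AnalyticSet] at hA
  obtain rfl | ⟨f, hf, rfl⟩ := hA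
  · exact nullMeasurableSet_empty
  choose K hKf hK hmK using fun k : ℕ =>
    exists_isCompact_measure_range_le (m := m) hf (ε := ((k : ℝ≥0∞) + 1)⁻¹) (by simp)
  have hmeas : MeasurableSet (⋃ k, K k) := .iUnion fun k => (hK k).isClosed.measurableSet
  have hlim : Tendsto (fun k : ℕ => m (⋃ k, K k) + ((k : ℝ≥0∞) + 1)⁻¹) atTop
      (𝓝 (m (⋃ k, K k))) := by
    simpa using (tendsto_const_nhds (x := m (⋃ k, K k))).add
      ((tendsto_add_atTop_iff_nat 1).2 ENNReal.tendsto_inv_nat_nhds_zero)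
  have hle : m (range f) ≤ m (⋃ k, K k) := ge_of_tendsto' hlim fun k =>
    (hmK k).trans (by gcongr; exact subset_iUnion K k)
  exact hmeas.nullMeasurableSet.congr
    (ae_eq_of_subset_of_measure_ge (iUnion_subset hKf) hle hmeas.nullMeasurableSet
      (measure_ne_top _ _))

variable {Ω X : Type*} [MeasurableSpace Ω] [MeasurableSpace X]

-- A measurable set depends on countably many measurable rectangles only, so it is pulled back
-- from a product whose first factor is standard Borel.
theorem exists_measurable_preimage_prodMap_eq {S : Set (Ω × X)} (hS : MeasurableSet S) :
    ∃ φ : Ω → ℕ → Bool, Measurable φ ∧ ∃ S' : Set ((ℕ → Bool) × X), MeasurableSet S' ∧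
      Prod.map φ id ⁻¹' S' = S := by
  classical
  rw [← generateFrom_prod] at hS
  induction S, hS using MeasurableSpace.generateFrom_induction with
  | hC s hs _ =>
    obtain ⟨A, hA, B, hB, rfl⟩ := hs
    refine ⟨fun ω _ => decide (ω ∈ A), ?_, {z | z 0 = true} ×ˢ B, ?_, by ext ⟨ω, x⟩; simp⟩
    · exact measurable_pi_lambda _ fun _ => measurable_to_bool (by simpa [preimage] using hA)
    · exact (measurableSet_eq_fun (measurable_pi_apply 0) measurable_const).prod hB
  | empty => exact ⟨fun _ _ => true, measurable_const, ∅, .empty, rfl⟩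
  | compl t _ ih =>
    obtain ⟨φ, hφ, S', hS', rfl⟩ := ih
    exact ⟨φ, hφ, S'ᶜ, hS'.compl, rfl⟩
  | iUnion s _ ih =>
    choose φ hφ S' hS' hs using ih
    refine ⟨fun ω k => φ k.unpair.1 ω k.unpair.2,
      measurable_pi_lambda _ fun k => (measurable_pi_apply _).comp (hφ _),
      ⋃ n, Prod.map (fun z i => z (Nat.pair n i)) id ⁻¹' S' n, .iUnion fun n =>
        Measurable.prodMap (measurable_pi_lambda _ fun k => measurable_pi_apply _)
          measurable_id (hS' n), ?_⟩
    simp_rw [← hs, preimage_iUnion]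
    ext ⟨ω, x⟩
    simp

theorem nullMeasurableSet_image_fst {P : Measure Ω} [IsFiniteMeasure P] [StandardBorelSpace X]
    {S : Set (Ω × X)} (hS : MeasurableSet S) : NullMeasurableSet (Prod.fst '' S) P := by
  obtain ⟨φ, hφ, S', hS', rfl⟩ := exists_measurable_preimage_prodMap_eq hS
  have himage : Prod.fst '' (Prod.map φ id ⁻¹' S') = φ ⁻¹' (Prod.fst '' S') := by
    ext ω
    simp
  rw [himage]
  exact (nullMeasurableSet_of_analyticSet (hS'.analyticSet_image measurable_fst)).preimage
    (hφ.measurePreserving P).quasiMeasurePreserving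

end Projection

section MaximalErgodic

variable {Ω : Type*} {θ : Ω → Ω} {u : Ω → ℝ}

theorem partialSups_birkhoffSum_succ_sub (n : ℕ) (ω : Ω) :
    partialSups (birkhoffSum θ u) (n + 1) ω - partialSups (birkhoffSum θ u) n (θ ω) =
      max (-partialSups (birkhoffSum θ u) n (θ ω)) (u ω) := by
  have hsucc : birkhoffSum θ u ∘ (· + 1) = fun k => u + birkhoffSum θ u k ∘ θ := by
    ext k ω
    exact birkhoffSum_succ' θ u k ω
  rw [partialSups_add_one', hsucc, partialSups_const_add]
  simp only [Nat.bot_eq_zero, Pi.sup_apply, Pi.add_apply, birkhoffSum_zero, Pi.partialSups_apply,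
    Function.comp_apply, zero_sub, add_sub_cancel_right, ← max_sub_sub_right]

theorem bddAbove_range_birkhoffSum_apply_iff (ω : Ω) :
    BddAbove (range fun n => birkhoffSum θ u n (θ ω)) ↔
      BddAbove (range fun n => birkhoffSum θ u n ω) := by
  constructor
  · rintro ⟨C, hC⟩
    refine ⟨max 0 (u ω + C), forall_mem_range.2 fun n => ?_⟩
    obtain _ | n := n
    · exact le_max_left _ _
    · rw [birkhoffSum_succ']
      exact le_max_of_le_right (by linarith [hC (mem_range_self n)])
  · rintro ⟨C, hC⟩
    refine ⟨C - u ω, forall_mem_range.2 fun n => ?_⟩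
    have hn := hC (mem_range_self (n + 1))
    simp only [birkhoffSum_succ'] at hn
    linarith

variable [MeasurableSpace Ω] {P : Measure Ω}

theorem measurable_birkhoffSum (hu : Measurable u) (hθ : Measurable θ) (n : ℕ) :
    Measurable (birkhoffSum θ u n) :=
  Finset.measurable_sum _ fun k _ => hu.comp (hθ.iterate k)

theorem integrable_birkhoffSum (hθ : MeasurePreserving θ P P) (hu : Integrable u P) (n : ℕ) :
    Integrable (birkhoffSum θ u n) P :=
  integrable_finsetSum _ fun k _ => (hθ.iterate k).integrable_comp_of_integrable hu

theorem integral_birkhoffSum (hθ : MeasurePreserving θ P P) (hu : Integrable u P) (n : ℕ) :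
    ∫ ω, birkhoffSum θ u n ω ∂P = n * ∫ ω, u ω ∂P := by
  have hcomp : ∀ k, ∫ ω, u (θ^[k] ω) ∂P = ∫ ω, u ω ∂P := fun k => by
    have hk := hθ.iterate k
    rw [← integral_map hk.aemeasurable (hk.map_eq.symm ▸ hu.aestronglyMeasurable), hk.map_eq]
  have hint : ∀ k, Integrable (fun ω => u (θ^[k] ω)) P := fun k =>
    (hθ.iterate k).integrable_comp_of_integrable hu
  simp only [birkhoffSum, integral_finsetSum _ fun k _ => hint k, hcomp, Finset.sum_const,
    Finset.card_range, nsmul_eq_mul]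

theorem integrable_partialSups_birkhoffSum (hθ : MeasurePreserving θ P P) (hu : Integrable u P)
    (n : ℕ) : Integrable (partialSups (birkhoffSum θ u) n) P := by
  induction n with
  | zero => exact integrable_birkhoffSum hθ hu 0
  | succ n ih =>
    rw [partialSups_add_one]
    exact ih.sup (integrable_birkhoffSum hθ hu (n + 1))

-- Garsia: with `M n = max (S 0, …, S n)`, the functions `M (n + 1) - M n ∘ θ` have nonnegative
-- integral, are dominated by `|u|`, and are eventually equal to `u` where `S` is unbounded.
theorem integral_nonneg_of_ae_not_bddAbove_birkhoffSum (hθ : MeasurePreserving θ P P)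
    (hu : Integrable u P)
    (hunbdd : ∀ᵐ ω ∂P, ¬BddAbove (range fun n => birkhoffSum θ u n ω)) :
    0 ≤ ∫ ω, u ω ∂P := by
  set M := partialSups (birkhoffSum θ u) with hM
  have hMint : ∀ n, Integrable (M n) P := integrable_partialSups_birkhoffSum hθ hu
  have hMθ : ∀ n, Integrable (fun ω => M n (θ ω)) P := fun n =>
    hθ.integrable_comp_of_integrable (hMint n)
  have hM0 : ∀ n ω, 0 ≤ M n ω := fun n ω => by
    simpa using le_partialSups_of_le (birkhoffSum θ u) n.zero_le ω
  have hint : ∀ n, 0 ≤ ∫ ω, (M (n + 1) ω - M n (θ ω)) ∂P := fun n => by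
    have hcomp : ∫ ω, M n (θ ω) ∂P = ∫ ω, M n ω ∂P := by
      rw [← integral_map hθ.aemeasurable (hθ.map_eq.symm ▸ (hMint n).aestronglyMeasurable),
        hθ.map_eq]
    rw [integral_sub (hMint (n + 1)) (hMθ n), hcomp, sub_nonneg]
    exact integral_mono (hMint n) (hMint (n + 1)) (M.monotone n.le_succ)
  refine ge_of_tendsto' (tendsto_integral_of_dominated_convergence (fun ω => |u ω|)
    (fun n => ((hMint (n + 1)).sub (hMθ n)).aestronglyMeasurable) hu.abs
    (fun n => ae_of_all _ fun ω => ?_) ?_) hint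
  · rw [Pi.sub_apply, hM, partialSups_birkhoffSum_succ_sub, Real.norm_eq_abs, abs_le]
    exact ⟨(neg_abs_le (u ω)).trans (le_max_right _ _),
      max_le ((neg_nonpos.2 (hM0 n (θ ω))).trans (abs_nonneg _)) (le_abs_self _)⟩
  · filter_upwards [hunbdd] with ω hω
    rw [← bddAbove_range_birkhoffSum_apply_iff, not_bddAbove_iff] at hω
    obtain ⟨_, ⟨n₀, rfl⟩, hn₀⟩ := hω (-u ω)
    refine tendsto_const_nhds.congr' ?_
    filter_upwards [eventually_ge_atTop n₀] with n hn
    have hle := le_partialSups_of_le (birkhoffSum θ u) hn (θ ω)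
    rw [Pi.sub_apply, hM, partialSups_birkhoffSum_succ_sub,
      max_eq_right (neg_le.1 (hn₀.le.trans hle))]

theorem setIntegral_nonneg_of_not_bddAbove_birkhoffSum (hθ : MeasurePreserving θ P P)
    (hu : Measurable u) (hui : Integrable u P) :
    0 ≤ ∫ ω in {ω | ¬BddAbove (range fun n => birkhoffSum θ u n ω)}, u ω ∂P := by
  set D : Set Ω := {ω | ¬BddAbove (range fun n => birkhoffSum θ u n ω)}
  have hD : MeasurableSet D :=
    (measurableSet_bddAbove_range (measurable_birkhoffSum hu hθ.measurable)).compl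
  have hinv : θ ⁻¹' D = D := ext fun ω => not_congr (bddAbove_range_birkhoffSum_apply_iff ω)
  have hθD : MeasurePreserving θ (P.restrict D) (P.restrict D) := by
    simpa only [hinv] using hθ.restrict_preimage hD
  exact integral_nonneg_of_ae_not_bddAbove_birkhoffSum hθD hui.restrict
    (ae_restrict_mem hD)

theorem setIntegral_nonneg_of_le_birkhoffSum [IsFiniteMeasure P] (hθ : MeasurePreserving θ P P)
    (hu : Integrable u P) {C : ℝ} (hC : ∀ᵐ ω ∂P, ∀ n, C ≤ birkhoffSum θ u n ω) {A : Set Ω}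
    (hA : MeasurableSet A) (hinv : θ ⁻¹' A = A) : 0 ≤ ∫ ω in A, u ω ∂P := by
  have hθA : MeasurePreserving θ (P.restrict A) (P.restrict A) := by
    simpa only [hinv] using hθ.restrict_preimage hA
  have hle : ∀ n : ℕ, C * P.real A ≤ n * ∫ ω in A, u ω ∂P := fun n => by
    rw [← integral_birkhoffSum hθA hu.restrict n]
    calc C * P.real A = ∫ _ in A, C ∂P := by simp [mul_comm]
      _ ≤ ∫ ω in A, birkhoffSum θ u n ω ∂P :=
        integral_mono_ae (integrable_const C) (integrable_birkhoffSum hθA hu.restrict n)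
          (ae_restrict_of_ae (hC.mono fun ω hω => hω n))
  by_contra! hneg
  obtain ⟨n, hn⟩ := exists_nat_gt (C * P.real A / ∫ ω in A, u ω ∂P)
  exact absurd (hle n) (not_le.2 ((div_lt_iff_of_neg hneg).1 hn))

theorem mul_measureReal_not_bddAbove_birkhoffSum_sub_le [IsFiniteMeasure P]
    (hθ : MeasurePreserving θ P P) (hu : Measurable u) (hui : Integrable u P) {C : ℝ}
    (hC : ∀ᵐ ω ∂P, ∀ n, C ≤ birkhoffSum θ u n ω) (ε : ℝ) :
    ε * P.real {ω | ¬BddAbove (range fun n => birkhoffSum θ (fun ω => u ω - ε) n ω)} ≤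
      ∫ ω, u ω ∂P := by
  set D := {ω | ¬BddAbove (range fun n => birkhoffSum θ (fun ω => u ω - ε) n ω)}
  have hvm : Measurable fun ω => u ω - ε := hu.sub_const ε
  have hD : MeasurableSet D :=
    (measurableSet_bddAbove_range (measurable_birkhoffSum hvm hθ.measurable)).compl
  have hinv : θ ⁻¹' Dᶜ = Dᶜ :=
    ext fun ω => not_congr (not_congr (bddAbove_range_birkhoffSum_apply_iff ω))
  have hpos : 0 ≤ ∫ ω in D, (u ω - ε) ∂P :=
    setIntegral_nonneg_of_not_bddAbove_birkhoffSum hθ hvm (hui.sub (integrable_const ε))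
  rw [integral_sub hui.integrableOn (integrable_const ε).integrableOn, setIntegral_const,
    smul_eq_mul] at hpos
  have hcompl := setIntegral_nonneg_of_le_birkhoffSum hθ hui hC hD.compl hinv
  linarith [integral_add_compl hD hui, mul_comm ε (P.real D)]

end MaximalErgodic

section AddContentOnUniv

variable {α : Type*}

theorem isSetRing_univ : IsSetRing (univ : Set (Set α)) := by
  constructor <;> simp

theorem addContent_mono_univ (m : AddContent ℝ≥0∞ (univ : Set (Set α))) {S S' : Set α}
    (h : S ⊆ S') : m S ≤ m S' :=
  addContent_mono isSetRing_univ.isSetSemiring (mem_univ S) (mem_univ S') h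

end AddContentOnUniv

section UpperMean

open scoped lp Pointwise

theorem exists_linearMap_apply_eq_le_of_sublinear {V : Type*} [AddCommGroup V] [Module ℝ V]
    {N : V → ℝ} (hsmul : ∀ c : ℝ, 0 < c → ∀ x, N (c • x) = c * N x)
    (hadd : ∀ x y, N (x + y) ≤ N x + N y) (s : V) :
    ∃ L : V →ₗ[ℝ] ℝ, L s = N s ∧ ∀ x, L x ≤ N x := by
  have hzero : N 0 = 0 := by
    have := hsmul 2 two_pos 0
    rw [smul_zero] at this
    linarith
  have hspan : ∀ c : ℝ, c • s = 0 → c • N s = 0 := by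
    rintro c hc
    obtain rfl | rfl := smul_eq_zero.1 hc
    · exact zero_smul ℝ _
    · rw [hzero, smul_zero]
  have hle : ∀ x : (LinearPMap.mkSpanSingleton' (σ := .id ℝ) s (N s) hspan).domain,
      LinearPMap.mkSpanSingleton' s (N s) hspan x ≤ N x := by
    rintro ⟨x, hx⟩
    obtain ⟨c, rfl⟩ := Submodule.mem_span_singleton.1 hx
    rw [LinearPMap.mkSpanSingleton'_apply, RingHom.id_apply, smul_eq_mul]
    obtain hc | rfl | hc := lt_trichotomy c 0
    · have hneg := hadd (c • s) (-c • s)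
      rw [← add_smul, add_neg_cancel, zero_smul, hzero, hsmul (-c) (neg_pos.2 hc)] at hneg
      linarith
    · simp [hzero]
    · exact (hsmul c hc s).ge
  obtain ⟨L, hL, hLN⟩ := exists_extension_of_le_sublinear _ N hsmul hadd hle
  exact ⟨L, (hL ⟨s, Submodule.mem_span_singleton_self s⟩).trans
    (LinearPMap.mkSpanSingleton'_apply_self s (N s) hspan _), hLN⟩

variable {Ω α : Type*}

/-- The indicator function of a set, as an element of the space of bounded functions. -/
noncomputable def boundedIndicator (S : Set α) : ℓ^∞(α, ℝ) :=
  ⟨S.indicator 1, memℓp_infty ⟨1, forall_mem_range.2 fun a => by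
    by_cases ha : a ∈ S <;> simp [ha]⟩⟩

@[simp]
theorem coe_boundedIndicator (S : Set α) : ⇑(boundedIndicator S) = S.indicator 1 := rfl

theorem abs_apply_le_norm (f : ℓ^∞(α, ℝ)) (a : α) : |f a| ≤ ‖f‖ :=
  lp.norm_apply_le_norm ENNReal.top_ne_zero f a

theorem boundedIndicator_union {S S' : Set α} (h : Disjoint S S') :
    boundedIndicator (S ∪ S') = boundedIndicator S + boundedIndicator S' :=
  lp.ext (indicator_union_of_disjoint h 1)

variable {mΩ : MeasurableSpace Ω} {P : Measure Ω} {θ : Ω → Ω} {π : α → Ω} {Φ : α → α}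
  {l : Filter α} {f g : ℓ^∞(α, ℝ)}

theorem eventually_birkhoffSum_le {f h : α → ℝ} {u : Ω → ℝ} (hΦ : Tendsto Φ l l)
    (hπ : Function.Semiconj π Φ θ) (hf : ∀ᶠ a in l, f a ≤ u (π a) + h a - h (Φ a)) (n : ℕ) :
    ∀ᶠ a in l, birkhoffSum Φ f n a ≤ birkhoffSum θ u n (π a) + h a - h (Φ^[n] a) := by
  induction n with
  | zero => simp
  | succ n ih =>
    filter_upwards [hf, hΦ.eventually ih] with a hfa hsum
    rw [birkhoffSum_succ', birkhoffSum_succ', Function.iterate_succ_apply, ← hπ a]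
    linarith

/-- The integrals of the functions `u` on the base which bound `f` from above up to a bounded
coboundary, eventually along `l`. -/
def coboundaryBounds (P : Measure Ω) (π : α → Ω) (Φ : α → α) (l : Filter α) (f : ℓ^∞(α, ℝ)) :
    Set ℝ :=
  {r | ∃ (u : Ω → ℝ) (h : ℓ^∞(α, ℝ)), Measurable u ∧ Integrable u P ∧
    (∀ᶠ a in l, f a ≤ u (π a) + h a - h (Φ a)) ∧ ∫ ω, u ω ∂P = r}

/-- The infimum of the upper bounds for the integral of `f` that hold for every invariant mean
over `P` which is concentrated on `l`. -/
noncomputable def upperMean (P : Measure Ω) (π : α → Ω) (Φ : α → α) (l : Filter α)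
    (f : ℓ^∞(α, ℝ)) : ℝ :=
  sInf (coboundaryBounds P π Φ l f)

theorem le_integral_of_eventually_le_add_sub [IsFiniteMeasure P] (hθ : MeasurePreserving θ P P)
    (hΦ : Tendsto Φ l l) (hπ : Function.Semiconj π Φ θ) (hl : ae P ≤ map π l) {c : ℝ}
    {h : ℓ^∞(α, ℝ)} {u : Ω → ℝ} (hu : Integrable u P)
    (hc : ∀ᶠ a in l, c ≤ u (π a) + h a - h (Φ a)) : c * P.real univ ≤ ∫ ω, u ω ∂P := by
  have hsum : ∀ n : ℕ, ∀ᵐ ω ∂P, n * c - 2 * ‖h‖ ≤ birkhoffSum θ u n ω := fun n => by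
    refine hl (mem_map.2 ?_)
    filter_upwards [eventually_birkhoffSum_le (f := fun _ => c) hΦ hπ hc n] with a ha
    have hlower := neg_le_of_abs_le (abs_apply_le_norm h (Φ^[n] a))
    have hupper := le_of_abs_le (abs_apply_le_norm h a)
    simp only [birkhoffSum, Finset.sum_const, Finset.card_range, nsmul_eq_mul] at ha
    change _ ≤ birkhoffSum θ u n (π a)
    simp only [birkhoffSum]
    linarith
  have hint : ∀ n : ℕ, (n * c - 2 * ‖h‖) * P.real univ ≤ n * ∫ ω, u ω ∂P := fun n => by
    rw [← integral_birkhoffSum hθ hu n]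
    calc (n * c - 2 * ‖h‖) * P.real univ = ∫ _, (n * c - 2 * ‖h‖) ∂P := by simp [mul_comm]
      _ ≤ ∫ ω, birkhoffSum θ u n ω ∂P :=
        integral_mono_ae (integrable_const _) (integrable_birkhoffSum hθ hu n) (hsum n)
  by_contra! hlt
  obtain ⟨n, hn⟩ := exists_nat_gt (2 * ‖h‖ * P.real univ / (c * P.real univ - ∫ ω, u ω ∂P))
  rw [div_lt_iff₀ (sub_pos.2 hlt)] at hn
  linarith [hint n]

theorem mem_coboundaryBounds_const [IsFiniteMeasure P] {c : ℝ} (hc : ∀ᶠ a in l, f a ≤ c) :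
    c * P.real univ ∈ coboundaryBounds P π Φ l f :=
  ⟨fun _ => c, 0, measurable_const, integrable_const c, by simpa using hc, by simp [mul_comm]⟩

theorem nonempty_coboundaryBounds [IsFiniteMeasure P] (f : ℓ^∞(α, ℝ)) :
    (coboundaryBounds P π Φ l f).Nonempty :=
  ⟨_, mem_coboundaryBounds_const (c := ‖f‖)
    (Eventually.of_forall fun a => le_of_abs_le (abs_apply_le_norm f a))⟩

theorem bddBelow_coboundaryBounds [IsFiniteMeasure P] (hθ : MeasurePreserving θ P P)
    (hΦ : Tendsto Φ l l) (hπ : Function.Semiconj π Φ θ) (hl : ae P ≤ map π l)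
    (f : ℓ^∞(α, ℝ)) : BddBelow (coboundaryBounds P π Φ l f) := by
  refine ⟨-‖f‖ * P.real univ, ?_⟩
  rintro _ ⟨u, h, -, hu, hf, rfl⟩
  refine le_integral_of_eventually_le_add_sub hθ hΦ hπ hl hu (h := h) ?_
  filter_upwards [hf] with a ha
  exact (neg_le_of_abs_le (abs_apply_le_norm f a)).trans ha

theorem coboundaryBounds_smul_subset {c : ℝ} (hc : 0 < c) (f : ℓ^∞(α, ℝ)) :
    c • coboundaryBounds P π Φ l f ⊆ coboundaryBounds P π Φ l (c • f) := by
  rintro _ ⟨_, ⟨u, h, hum, hu, hf, rfl⟩, rfl⟩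
  refine ⟨fun ω => c * u ω, c • h, hum.const_mul c, hu.const_mul c, ?_, integral_const_mul c u⟩
  filter_upwards [hf] with a ha
  simpa [mul_add, mul_sub] using mul_le_mul_of_nonneg_left ha hc.le

theorem upperMean_smul {c : ℝ} (hc : 0 < c) (f : ℓ^∞(α, ℝ)) :
    upperMean P π Φ l (c • f) = c * upperMean P π Φ l f := by
  have heq : coboundaryBounds P π Φ l (c • f) = c • coboundaryBounds P π Φ l f := by
    refine (subset_smul_set_iff₀ hc.ne').2 ?_ |>.antisymm (coboundaryBounds_smul_subset hc f)
    simpa [hc.ne'] using coboundaryBounds_smul_subset (P := P) (π := π) (Φ := Φ) (l := l)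
      (inv_pos.2 hc) (c • f)
  rw [upperMean, heq, Real.sInf_smul_of_nonneg hc.le, smul_eq_mul, upperMean]

theorem coboundaryBounds_add_subset :
    coboundaryBounds P π Φ l f + coboundaryBounds P π Φ l g ⊆
      coboundaryBounds P π Φ l (f + g) := by
  rintro _ ⟨_, ⟨u, h, hum, hu, hf, rfl⟩, _, ⟨v, k, hvm, hv, hg, rfl⟩, rfl⟩
  refine ⟨fun ω => u ω + v ω, h + k, hum.add hvm, hu.add hv, ?_, integral_add hu hv⟩
  filter_upwards [hf, hg] with a hfa hga
  simp only [lp.coeFn_add, Pi.add_apply]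
  linarith

theorem upperMean_add_le [IsFiniteMeasure P] (hθ : MeasurePreserving θ P P)
    (hΦ : Tendsto Φ l l) (hπ : Function.Semiconj π Φ θ) (hl : ae P ≤ map π l)
    (f g : ℓ^∞(α, ℝ)) :
    upperMean P π Φ l (f + g) ≤ upperMean P π Φ l f + upperMean P π Φ l g := by
  have hbdd := bddBelow_coboundaryBounds hθ hΦ hπ hl
  rw [upperMean, upperMean, upperMean, ← csInf_add (nonempty_coboundaryBounds f) (hbdd f)
    (nonempty_coboundaryBounds g) (hbdd g)]
  exact csInf_le_csInf (hbdd _) ((nonempty_coboundaryBounds f).add (nonempty_coboundaryBounds g))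
    coboundaryBounds_add_subset

theorem upperMean_le_integral [IsFiniteMeasure P] (hθ : MeasurePreserving θ P P)
    (hΦ : Tendsto Φ l l) (hπ : Function.Semiconj π Φ θ) (hl : ae P ≤ map π l) {u : Ω → ℝ}
    (hu : Measurable u) (hui : Integrable u P) (h : ℓ^∞(α, ℝ))
    (hf : ∀ᶠ a in l, f a ≤ u (π a) + h a - h (Φ a)) : upperMean P π Φ l f ≤ ∫ ω, u ω ∂P :=
  csInf_le (bddBelow_coboundaryBounds hθ hΦ hπ hl f) ⟨u, h, hu, hui, hf, rfl⟩

theorem upperMean_nonpos [IsFiniteMeasure P] (hθ : MeasurePreserving θ P P)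
    (hΦ : Tendsto Φ l l) (hπ : Function.Semiconj π Φ θ) (hl : ae P ≤ map π l) (h : ℓ^∞(α, ℝ))
    (hf : ∀ᶠ a in l, f a ≤ h a - h (Φ a)) : upperMean P π Φ l f ≤ 0 := by
  simpa using upperMean_le_integral hθ hΦ hπ hl (u := fun _ => 0) measurable_const
    (integrable_zero Ω ℝ P) h (hf.mono fun a ha => by rwa [zero_add])

theorem apply_boundedIndicator_preimage_of_measurableSet [IsFiniteMeasure P]
    (hθ : MeasurePreserving θ P P) (hΦ : Tendsto Φ l l) (hπ : Function.Semiconj π Φ θ)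
    (hl : ae P ≤ map π l) {L : ℓ^∞(α, ℝ) →ₗ[ℝ] ℝ} (hL : ∀ f, L f ≤ upperMean P π Φ l f)
    {A : Set Ω} (hA : MeasurableSet A) : L (boundedIndicator (π ⁻¹' A)) = P.real A := by
  have hum : Measurable (A.indicator (1 : Ω → ℝ)) := measurable_one.indicator hA
  have hui : Integrable (A.indicator (1 : Ω → ℝ)) P := (integrable_const 1).indicator hA
  have hle : ∀ {f : ℓ^∞(α, ℝ)} {u : Ω → ℝ}, Measurable u → Integrable u P →
      (∀ a, f a = u (π a)) → L f ≤ ∫ ω, u ω ∂P := fun hu hui hfu =>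
    (hL _).trans (upperMean_le_integral hθ hΦ hπ hl hu hui 0
      (Eventually.of_forall fun a => by simp [hfu]))
  rw [← integral_indicator_one hA]
  refine le_antisymm (hle hum hui fun a => rfl) (neg_le_neg_iff.1 ?_)
  rw [← map_neg, ← integral_neg]
  exact hle hum.neg hui.neg fun a => rfl

theorem apply_boundedIndicator_preimage [IsFiniteMeasure P] (hθ : MeasurePreserving θ P P)
    (hΦ : Tendsto Φ l l) (hπ : Function.Semiconj π Φ θ) (hl : ae P ≤ map π l)
    {L : ℓ^∞(α, ℝ) →ₗ[ℝ] ℝ} (hL : ∀ f, L f ≤ upperMean P π Φ l f) (S : Set α) :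
    L (boundedIndicator (Φ ⁻¹' S)) = L (boundedIndicator S) := by
  have hle : ∀ f h : ℓ^∞(α, ℝ), (∀ a, f a = h a - h (Φ a)) → L f ≤ 0 := fun f h hfh =>
    (hL f).trans (upperMean_nonpos hθ hΦ hπ hl h (Eventually.of_forall fun a => (hfh a).le))
  refine le_antisymm (sub_nonpos.1 ?_) (sub_nonpos.1 ?_) <;> rw [← map_sub]
  · exact hle _ (-boundedIndicator S) fun a => (neg_sub_neg _ _).symm
  · exact hle _ (boundedIndicator S) fun a => rfl

theorem exists_addContent_eq_upperMean [IsFiniteMeasure P] (hθ : MeasurePreserving θ P P)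
    (hΦ : Tendsto Φ l l) (hπ : Function.Semiconj π Φ θ) (hl : ae P ≤ map π l) (S₀ : Set α) :
    ∃ m : AddContent ℝ≥0∞ (univ : Set (Set α)),
      m S₀ = ENNReal.ofReal (upperMean P π Φ l (boundedIndicator S₀)) ∧
      (∀ A, MeasurableSet A → m (π ⁻¹' A) = P A) ∧ (∀ S, Sᶜ ∈ l → m S = 0) ∧
      ∀ S, m (Φ ⁻¹' S) = m S := by
  obtain ⟨L, hLS₀, hL⟩ := exists_linearMap_apply_eq_le_of_sublinear
    (N := upperMean P π Φ l) (fun c hc f => upperMean_smul hc f)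
    (upperMean_add_le hθ hΦ hπ hl) (boundedIndicator S₀)
  have hnonneg : ∀ S, 0 ≤ L (boundedIndicator S) := fun S => by
    rw [← neg_nonpos, ← map_neg]
    refine (hL _).trans (upperMean_nonpos hθ hΦ hπ hl 0 (Eventually.of_forall fun a => ?_))
    exact (neg_nonpos.2 (indicator_nonneg (fun _ _ => zero_le_one) a)).trans (sub_zero _).ge
  refine ⟨isSetRing_univ.addContent_of_union
    (fun S => ENNReal.ofReal (L (boundedIndicator S))) ?_ ?_,
    congrArg ENNReal.ofReal hLS₀, fun A hA => ?_, fun S hS => ?_, fun S => ?_⟩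
  · have : boundedIndicator (∅ : Set α) = 0 := lp.ext (indicator_empty _)
    simp [this]
  · intro S S' _ _ hdisj
    rw [boundedIndicator_union hdisj, map_add, ENNReal.ofReal_add (hnonneg S) (hnonneg S')]
  · change ENNReal.ofReal (L _) = _
    rw [apply_boundedIndicator_preimage_of_measurableSet hθ hΦ hπ hl hL hA, ofReal_measureReal]
  · refine ENNReal.ofReal_of_nonpos ((hL _).trans (upperMean_nonpos hθ hΦ hπ hl 0 ?_))
    filter_upwards [hS] with a ha
    simp [notMem_of_mem_compl ha]
  · change ENNReal.ofReal (L _) = ENNReal.ofReal (L _)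
    rw [apply_boundedIndicator_preimage hθ hΦ hπ hl hL S]

end UpperMean

section Regularization

open PiNat

/-- The measurable sets of `Ω × (ℕ → Bool)` whose fibers over `Ω` depend on only finitely many
coordinates, uniformly in the fiber. On this ring finitely additive set functions with a countably
additive marginal on `Ω` are countably additive. -/
def finitaryRing (Ω : Type*) [MeasurableSpace Ω] : Set (Set (Ω × (ℕ → Bool))) :=
  {S | MeasurableSet S ∧
    ∀ᶠ N in atTop, ∀ ω x, ∀ y ∈ cylinder x N, (ω, x) ∈ S ↔ (ω, y) ∈ S}

variable {Ω X : Type*} [MeasurableSpace Ω] {P : Measure Ω} {S : Set (Ω × (ℕ → Bool))}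

theorem isSetRing_finitaryRing : IsSetRing (finitaryRing Ω) where
  empty_mem := ⟨.empty, by simp⟩
  union_mem := by
    rintro S S' ⟨hS, hSN⟩ ⟨hS', hSN'⟩
    refine ⟨hS.union hS', ?_⟩
    filter_upwards [hSN, hSN'] with N h h' ω x y hy
    exact or_congr (h ω x y hy) (h' ω x y hy)
  sdiff_mem := by
    rintro S S' ⟨hS, hSN⟩ ⟨hS', hSN'⟩
    refine ⟨hS.diff hS', ?_⟩
    filter_upwards [hSN, hSN'] with N h h' ω x y hy
    exact and_congr (h ω x y hy) (not_congr (h' ω x y hy))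

theorem prod_cylinder_mem_finitaryRing {A : Set Ω} (hA : MeasurableSet A) (x : ℕ → Bool) (N : ℕ) :
    A ×ˢ cylinder x N ∈ finitaryRing Ω := by
  refine ⟨hA.prod (isOpen_cylinder _ x N).measurableSet, ?_⟩
  filter_upwards [eventually_ge_atTop N] with M hM ω y z hz
  refine and_congr_right fun _ => ?_
  rw [mem_cylinder_comm, mem_cylinder_comm x z, mem_cylinder_iff_eq.1 (cylinder_anti y hM hz)]

theorem preimage_fst_mem_finitaryRing {A : Set Ω} (hA : MeasurableSet A) :
    Prod.fst ⁻¹' A ∈ finitaryRing Ω := by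
  rw [← prod_univ, ← cylinder_zero fun _ => false]
  exact prod_cylinder_mem_finitaryRing hA _ 0

theorem generateFrom_finitaryRing :
    MeasurableSpace.generateFrom (finitaryRing Ω) = Prod.instMeasurableSpace := by
  refine le_antisymm (MeasurableSpace.generateFrom_le fun S hS => hS.1) (sup_le ?_ ?_)
  · rintro _ ⟨A, hA, rfl⟩
    exact MeasurableSpace.measurableSet_generateFrom (preimage_fst_mem_finitaryRing hA)
  · refine measurable_iff_comap_le.1 (@measurable_pi_lambda _ _ _ (_) _ _ fun n =>
      @measurable_to_bool _ (_) _ (MeasurableSpace.measurableSet_generateFrom ⟨?_, ?_⟩))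
    · exact ((measurable_pi_apply n).comp measurable_snd) (measurableSet_singleton true)
    · filter_upwards [eventually_gt_atTop n] with N hN ω x y hy
      simp [mem_cylinder_iff.1 hy n hN]

theorem isClosed_preimage_mk_of_mem_finitaryRing (hS : S ∈ finitaryRing Ω) (ω : Ω) :
    IsClosed (Prod.mk ω ⁻¹' S) := by
  obtain ⟨N, hN⟩ := hS.2.exists
  refine isOpen_compl_iff.1 (isOpen_iff_mem_nhds.2 fun x hx => ?_)
  filter_upwards [(isOpen_cylinder _ x N).mem_nhds (self_mem_cylinder x N)] with y hy
  exact fun hyS => hx ((hN ω x y hy).2 hyS)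

theorem exists_cylinder_denseSeq_eq (x : ℕ → Bool) (N : ℕ) :
    ∃ k, cylinder (TopologicalSpace.denseSeq (ℕ → Bool) k) N = cylinder x N := by
  obtain ⟨k, hk⟩ := (TopologicalSpace.denseRange_denseSeq (ℕ → Bool)).exists_mem_open
    (isOpen_cylinder _ x N) ⟨x, self_mem_cylinder x N⟩
  exact ⟨k, mem_cylinder_iff_eq.1 hk⟩

theorem measurableSet_image_fst_of_mem_finitaryRing (hS : S ∈ finitaryRing Ω) :
    MeasurableSet (Prod.fst '' S) := by
  obtain ⟨N, hN⟩ := hS.2.exists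
  have himage : Prod.fst '' S =
      ⋃ k, (fun ω => (ω, TopologicalSpace.denseSeq (ℕ → Bool) k)) ⁻¹' S := by
    ext ω
    simp only [mem_image, Prod.exists, exists_and_right, exists_eq_right, mem_iUnion,
      mem_preimage]
    refine ⟨fun ⟨x, hx⟩ => ?_, fun ⟨k, hk⟩ => ⟨_, hk⟩⟩
    obtain ⟨k, hk⟩ := exists_cylinder_denseSeq_eq x N
    exact ⟨k, (hN ω x _ (hk ▸ self_mem_cylinder _ N)).1 hx⟩
  rw [himage]
  exact .iUnion fun k => measurable_prodMk_right hS.1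

variable {m : AddContent ℝ≥0∞ (univ : Set (Set (Ω × (ℕ → Bool))))}

theorem tendsto_addContent_of_antitone_finitaryRing [IsFiniteMeasure P]
    (hm : ∀ A, MeasurableSet A → m (Prod.fst ⁻¹' A) = P A) {S : ℕ → Set (Ω × (ℕ → Bool))}
    (hS : ∀ k, S k ∈ finitaryRing Ω) (hanti : Antitone S) (hempty : ⋂ k, S k = ∅) :
    Tendsto (fun k => m (S k)) atTop (𝓝 0) := by
  have himage : ⋂ k, Prod.fst '' S k = ∅ := by
    refine eq_empty_of_forall_notMem fun ω hω => ?_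
    have hclosed := fun k => isClosed_preimage_mk_of_mem_finitaryRing (hS k) ω
    obtain ⟨x, hx⟩ := IsCompact.nonempty_iInter_of_sequence_nonempty_isCompact_isClosed
      (fun k => Prod.mk ω ⁻¹' S k) (fun k => preimage_mono (hanti k.le_succ))
      (fun k => by simpa [Set.Nonempty] using mem_iInter.1 hω k) (hclosed 0).isCompact hclosed
    exact notMem_empty (ω, x) (hempty ▸ mem_iInter.2 fun k => mem_iInter.1 hx k)
  have hlim := tendsto_measure_iInter_atTop (μ := P)
    (fun k => (measurableSet_image_fst_of_mem_finitaryRing (hS k)).nullMeasurableSet)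
    (fun _ _ hij => image_mono (hanti hij)) ⟨0, measure_ne_top P _⟩
  rw [himage, measure_empty] at hlim
  refine tendsto_of_tendsto_of_tendsto_of_le_of_le tendsto_const_nhds hlim (fun _ => zero_le)
    fun k => (addContent_mono_univ m (subset_preimage_image Prod.fst (S k))).trans_eq
      (hm _ (measurableSet_image_fst_of_mem_finitaryRing (hS k)))

theorem exists_measure_eq_addContent_finitaryRing [IsFiniteMeasure P]
    (hm : ∀ A, MeasurableSet A → m (Prod.fst ⁻¹' A) = P A) :
    ∃ μ : Measure (Ω × (ℕ → Bool)), ∀ S ∈ finitaryRing Ω, μ S = m S := by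
  let mC : AddContent ℝ≥0∞ (finitaryRing Ω) :=
    isSetRing_finitaryRing.addContent_of_union m addContent_empty fun _ _ =>
      addContent_union isSetRing_univ (mem_univ _) (mem_univ _)
  have hfinite : ∀ S ∈ finitaryRing Ω, mC S ≠ ∞ := fun S _ =>
    ((addContent_mono_univ m (subset_univ S)).trans_lt
      ((hm univ .univ).trans_lt (measure_lt_top P univ))).ne
  have htsum := addContent_iUnion_eq_sum_of_tendsto_zero isSetRing_finitaryRing mC hfinite
    fun _ => tendsto_addContent_of_antitone_finitaryRing hm
  exact ⟨mC.measure isSetRing_finitaryRing.isSetSemiring generateFrom_finitaryRing.ge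
      (isSigmaSubadditive_of_addContent_iUnion_eq_tsum isSetRing_finitaryRing htsum),
    fun S hS => mC.measure_eq isSetRing_finitaryRing.isSetSemiring
      generateFrom_finitaryRing.symm _ hS⟩

theorem nullMeasurableSet_setOf_subset_preimage_mk [IsFiniteMeasure P] [MeasurableSpace X]
    [StandardBorelSpace X] {U : Set (Ω × X)} (hU : MeasurableSet U) {Z : Set X}
    (hZ : MeasurableSet Z) : NullMeasurableSet {ω | Z ⊆ Prod.mk ω ⁻¹' U} P := by
  have hcompl : {ω | Z ⊆ Prod.mk ω ⁻¹' U}ᶜ = Prod.fst '' ((univ ×ˢ Z) \ U) := by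
    ext ω
    simp [not_subset, mem_compl_iff]
  exact NullMeasurableSet.compl_iff.1
    (hcompl ▸ nullMeasurableSet_image_fst ((MeasurableSet.univ.prod hZ).diff hU))

theorem exists_iUnion_prod_cylinder_ae_eq [IsFiniteMeasure P] {U : Set (Ω × (ℕ → Bool))}
    (hU : MeasurableSet U) (hopen : ∀ᵐ ω ∂P, IsOpen (Prod.mk ω ⁻¹' U)) :
    ∃ (A : ℕ × ℕ → Set Ω) (z : ℕ × ℕ → ℕ → Bool), (∀ i, MeasurableSet (A i)) ∧
      (∀ i, A i ×ˢ cylinder (z i) i.2 ⊆ U) ∧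
      ∀ᵐ ω ∂P, ∀ x, (ω, x) ∈ U → (ω, x) ∈ ⋃ i, A i ×ˢ cylinder (z i) i.2 := by
  let z : ℕ × ℕ → ℕ → Bool := fun i => TopologicalSpace.denseSeq (ℕ → Bool) i.1
  choose A hAsub hA hAeq using fun i : ℕ × ℕ =>
    (nullMeasurableSet_setOf_subset_preimage_mk (P := P) hU
      (isOpen_cylinder _ (z i) i.2).measurableSet).exists_measurable_subset_ae_eq
  refine ⟨A, z, hA, fun i p hp => hAsub i hp.1 hp.2, ?_⟩
  filter_upwards [hopen, ae_all_iff.2 fun i => (hAeq i).mem_iff] with ω hω hωA x hx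
  obtain ⟨_, ⟨y, N, rfl⟩, hxy, hyU⟩ :=
    (isTopologicalBasis_cylinders fun _ => Bool).exists_subset_of_mem_open hx hω
  obtain ⟨k, hk⟩ := exists_cylinder_denseSeq_eq y N
  exact mem_iUnion.2 ⟨(k, N), (hωA (k, N)).2 (hk.subset.trans hyU), hk.superset hxy⟩

theorem exists_measure_map_fst_eq_forall_le_addContent_cantor [IsFiniteMeasure P]
    (hm : ∀ A, MeasurableSet A → m (Prod.fst ⁻¹' A) = P A) :
    ∃ μ : Measure (Ω × (ℕ → Bool)), μ.map Prod.fst = P ∧ ∀ U, MeasurableSet U →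
      (∀ᵐ ω ∂P, IsOpen (Prod.mk ω ⁻¹' U)) → μ U ≤ m U := by
  obtain ⟨μ, hμ⟩ := exists_measure_eq_addContent_finitaryRing hm
  have hfst : μ.map Prod.fst = P := by
    ext A hA
    rw [Measure.map_apply measurable_fst hA, hμ _ (preimage_fst_mem_finitaryRing hA), hm A hA]
  refine ⟨μ, hfst, fun U hU hopen => ?_⟩
  obtain ⟨A, z, hA, hsub, hae⟩ := exists_iUnion_prod_cylinder_ae_eq hU hopen
  have hle : U ≤ᵐ[μ] ⋃ i, A i ×ˢ cylinder (z i) i.2 := by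
    rw [← hfst] at hae
    filter_upwards [ae_of_ae_map measurable_fst.aemeasurable hae] with p hp
    exact hp p.2
  have hdirected : Directed (· ⊆ ·) fun t : Finset (ℕ × ℕ) => ⋃ i ∈ t, A i ×ˢ cylinder (z i) i.2 :=
    Monotone.directed_le fun _ _ hst => biUnion_subset_biUnion_left hst
  refine (measure_mono_ae hle).trans ?_
  rw [iUnion_eq_iUnion_finset, hdirected.measure_iUnion]
  refine iSup_le fun t => ?_
  rw [hμ _ (isSetRing_finitaryRing.biUnion_mem t fun i _ =>
    prod_cylinder_mem_finitaryRing (hA i) (z i) i.2)]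
  exact addContent_mono_univ m (iUnion₂_subset fun i _ => hsub i)

theorem exists_measure_map_fst_eq_forall_le_addContent [IsFiniteMeasure P] [TopologicalSpace X]
    [TopologicalSpace.MetrizableSpace X] [CompactSpace X] [Nonempty X] [MeasurableSpace X]
    [BorelSpace X] (m : AddContent ℝ≥0∞ (univ : Set (Set (Ω × X))))
    (hm : ∀ A, MeasurableSet A → m (Prod.fst ⁻¹' A) = P A) :
    ∃ μ : Measure (Ω × X), μ.map Prod.fst = P ∧ ∀ U, MeasurableSet U →
      (∀ᵐ ω ∂P, IsOpen (Prod.mk ω ⁻¹' U)) → μ U ≤ m U := by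
  let _ := TopologicalSpace.metrizableSpaceMetric X
  obtain ⟨q, hq, hsurj⟩ := exists_nat_bool_continuous_surjective_of_compact X
  let σ : Ω × X → Ω × (ℕ → Bool) := Prod.map id (Function.surjInv hsurj)
  let mσ : AddContent ℝ≥0∞ (univ : Set (Set (Ω × (ℕ → Bool)))) :=
    isSetRing_univ.addContent_of_union (fun S => m (σ ⁻¹' S)) addContent_empty fun _ _ h =>
      addContent_union isSetRing_univ (mem_univ _) (mem_univ _) (h.preimage σ)
  obtain ⟨μ, hμ, hμU⟩ := exists_measure_map_fst_eq_forall_le_addContent_cantor (m := mσ) hm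
  have hqm : Measurable (Prod.map id q : Ω × (ℕ → Bool) → Ω × X) :=
    measurable_id.prodMap hq.measurable
  refine ⟨μ.map (Prod.map id q), ?_, fun U hU hopen => ?_⟩
  · rw [Measure.map_map measurable_fst hqm]
    exact hμ
  · have hσ : Prod.map id q ∘ σ = id := funext fun p => Prod.ext rfl (Function.surjInv_eq hsurj p.2)
    rw [Measure.map_apply hqm hU]
    refine (hμU _ (hqm hU) (hopen.mono fun ω hω => hω.preimage hq)).trans_eq ?_
    change m (σ ⁻¹' (Prod.map id q ⁻¹' U)) = m U
    rw [← preimage_comp, hσ, preimage_id]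

end Regularization

section BundleFilter

variable {Ω X : Type*} [MeasurableSpace Ω]

/-- The skew product `(ω, x) ↦ (θ ω, T_ω x)`. -/
def skewProduct (θ : Ω → Ω) (T : Ω → X → X) (p : Ω × X) : Ω × X :=
  (θ p.1, T p.1 p.2)

/-- The filter of the sets which contain the fiber `E_ω` over almost every `ω`. -/
def bundleFilter (P : Measure Ω) (E : Set (Ω × X)) : Filter (Ω × X) :=
  comap Prod.fst (ae P) ⊓ 𝓟 E

variable {P : Measure Ω} {θ : Ω → Ω} {T : Ω → X → X} {E : Set (Ω × X)}

theorem eventually_bundleFilter {r : Ω × X → Prop} :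
    (∀ᶠ p in bundleFilter P E, r p) ↔ ∀ᵐ ω ∂P, ∀ x ∈ fiber E ω, r (ω, x) := by
  simp only [bundleFilter, eventually_inf_principal, eventually_comap, Prod.forall, fiber]
  refine eventually_congr (Eventually.of_forall fun ω => ?_)
  exact ⟨fun h x hx => h ω x rfl hx, fun h _ x hω hx => by subst hω; exact h x hx⟩

theorem tendsto_skewProduct_bundleFilter (hθ : Measure.QuasiMeasurePreserving θ P P)
    (hTmap : ∀ᵐ ω ∂P, MapsTo (T ω) (fiber E ω) (fiber E (θ ω))) :
    Tendsto (skewProduct θ T) (bundleFilter P E) (bundleFilter P E) := by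
  refine tendsto_inf.2 ⟨tendsto_comap_iff.2 ?_, tendsto_principal.2 ?_⟩
  · exact (hθ.tendsto_ae.comp tendsto_comap).mono_left inf_le_left
  · exact eventually_bundleFilter.2 hTmap

theorem ae_le_map_fst_bundleFilter (hne : ∀ᵐ ω ∂P, (fiber E ω).Nonempty) :
    ae P ≤ map Prod.fst (bundleFilter P E) := by
  intro A hA
  filter_upwards [hne, eventually_bundleFilter.1 (mem_map.1 hA)] with ω ⟨x, hx⟩ hω
  exact hω x hx

end BundleFilter

section InvariantMeasure

theorem eq_of_forall_isOpen_measure_le_closure {X : Type*} [TopologicalSpace X] [NormalSpace X]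
    [MeasurableSpace X] {μ ν : Measure X} [IsFiniteMeasure μ] [μ.WeaklyRegular]
    [ν.OuterRegular] (huniv : μ univ = ν univ)
    (hle : ∀ G, IsOpen G → μ G ≤ ν (closure G)) : μ = ν := by
  have hopen : ∀ G, IsOpen G → μ G ≤ ν G := fun G hG => by
    rw [hG.measure_eq_iSup_isClosed]
    refine iSup₂_le fun F hFG => iSup_le fun hF => ?_
    obtain ⟨V, hV, hFV, hVG⟩ := normal_exists_closure_subset hF hG hFG
    exact (measure_mono hFV).trans ((hle V hV).trans (measure_mono hVG))
  have hμν : μ ≤ ν := Measure.le_intro fun S _ _ => by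
    rw [S.measure_eq_iInf_isOpen ν]
    exact le_iInf₂ fun G hSG => le_iInf fun hG => (measure_mono hSG).trans (hopen G hG)
  exact Measure.eq_of_le_of_measure_univ_eq hμν huniv

variable {Ω X : Type*} [MeasurableSpace Ω] [MeasurableSpace X]

theorem eq_of_forall_measure_prod_le_closure [TopologicalSpace X]
    [TopologicalSpace.PseudoMetrizableSpace X] [BorelSpace X] {μ ν : Measure (Ω × X)}
    [IsFiniteMeasure μ] [IsFiniteMeasure ν] (hfst : μ.map Prod.fst = ν.map Prod.fst)
    (hle : ∀ A G, MeasurableSet A → IsOpen G → μ (A ×ˢ G) ≤ ν (A ×ˢ closure G)) : μ = ν := by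
  refine Measure.ext_prod fun {A B} hA hB => ?_
  have hsection : ∀ (κ : Measure (Ω × X)) {B : Set X}, MeasurableSet B →
      (κ.restrict (Prod.fst ⁻¹' A)).map Prod.snd B = κ (A ×ˢ B) := fun κ B hB => by
    rw [Measure.map_apply measurable_snd hB, Measure.restrict_apply (measurable_snd hB), inter_comm,
      Set.prod_eq]
  rw [← hsection μ hB, ← hsection ν hB]
  refine DFunLike.congr_fun (eq_of_forall_isOpen_measure_le_closure ?_ fun G hG => ?_) B
  · rw [hsection μ .univ, hsection ν .univ, prod_univ, ← Measure.map_apply measurable_fst hA, hfst,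
      Measure.map_apply measurable_fst hA]
  · rw [hsection μ hG.measurableSet, hsection ν isClosed_closure.measurableSet]
    exact hle A G hA hG

/-- The set `I_P(E)` of the measures on `E` with marginal `P` which are invariant under the skew
product. -/
def invariantMeasures (P : Measure Ω) (θ : Ω → Ω) (T : Ω → X → X) (E : Set (Ω × X)) :
    Set (Measure (Ω × X)) :=
  {μ | μ.map Prod.fst = P ∧ (∀ᵐ p ∂μ, p ∈ E) ∧ μ.map (skewProduct θ T) = μ}

variable {P : Measure Ω} {θ : Ω → Ω} {T : Ω → X → X} {E : Set (Ω × X)}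

theorem mem_invariantMeasures_iff [IsProbabilityMeasure P] (hE : MeasurableSet E)
    {μ : Measure (Ω × X)} :
    μ ∈ invariantMeasures P θ T E ↔
      IsProbabilityMeasure μ ∧ μ.map Prod.fst = P ∧ μ E = 1 ∧ μ.map (skewProduct θ T) = μ := by
  have hprob : μ.map Prod.fst = P → IsProbabilityMeasure μ := fun h => by
    rw [← Measure.isProbabilityMeasure_map_iff measurable_fst.aemeasurable, h]
    infer_instance
  constructor
  · rintro ⟨hfst, hμE, hinv⟩
    have := hprob hfst
    exact ⟨this, hfst, (prob_compl_eq_zero_iff hE).1 hμE, hinv⟩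
  · rintro ⟨_, hfst, hμE, hinv⟩
    exact ⟨hfst, (prob_compl_eq_zero_iff hE).2 hμE, hinv⟩

variable [TopologicalSpace X] {m : AddContent ℝ≥0∞ (univ : Set (Set (Ω × X)))}
  {μ : Measure (Ω × X)}

theorem addContent_le_measure_of_ae_isClosed [IsFiniteMeasure μ] (huniv : μ univ = m univ)
    (hle : ∀ U, MeasurableSet U → (∀ᵐ ω ∂P, IsOpen (Prod.mk ω ⁻¹' U)) → μ U ≤ m U)
    {S : Set (Ω × X)} (hS : MeasurableSet S) (hclosed : ∀ᵐ ω ∂P, IsClosed (Prod.mk ω ⁻¹' S)) :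
    m S ≤ μ S := by
  have hsum : m S + m Sᶜ = μ S + μ Sᶜ := by
    rw [measure_add_measure_compl hS, huniv, ← union_compl_self S]
    exact (addContent_union isSetRing_univ (mem_univ _) (mem_univ _) disjoint_compl_right).symm
  have hfin : m Sᶜ ≠ ∞ :=
    ((addContent_mono_univ m (subset_univ Sᶜ)).trans_lt (huniv ▸ measure_lt_top μ univ)).ne
  refine (ENNReal.add_le_add_iff_right hfin).1 (hsum.trans_le ?_)
  gcongr
  exact hle _ hS.compl (hclosed.mono fun ω hω => hω.isOpen_compl)

theorem measure_preimage_skewProduct_prod_le_closure [BorelSpace X] [IsFiniteMeasure μ]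
    (hθ : Measurable θ) (hT : Measurable fun p : Ω × X => T p.1 p.2) (hE : MeasurableSet E)
    (hcl : ∀ᵐ ω ∂P, IsClosed (fiber E ω)) (hTc : ∀ᵐ ω ∂P, ContinuousOn (T ω) (fiber E ω))
    (huniv : μ univ = m univ)
    (hle : ∀ U, MeasurableSet U → (∀ᵐ ω ∂P, IsOpen (Prod.mk ω ⁻¹' U)) → μ U ≤ m U)
    (hnull : m Eᶜ = 0) (hinv : ∀ S, m (skewProduct θ T ⁻¹' S) = m S) {A : Set Ω} {G : Set X}
    (hA : MeasurableSet A) (hG : IsOpen G) :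
    μ (skewProduct θ T ⁻¹' (A ×ˢ G)) ≤ μ (A ×ˢ closure G) := by
  have hopen : ∀ᵐ ω ∂P, IsOpen (Prod.mk ω ⁻¹' (skewProduct θ T ⁻¹' (A ×ˢ G) ∪ Eᶜ)) := by
    filter_upwards [hcl, hTc] with ω hω hTω
    refine isClosed_compl_iff.1 ?_
    by_cases hωA : θ ω ∈ A
    · convert hTω.preimage_isClosed_of_isClosed hω hG.isClosed_compl using 1
      ext x
      simp [fiber, skewProduct, hωA, and_comm]
    · convert hω using 1
      ext x
      simp [fiber, skewProduct, hωA]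
  have hclosed : ∀ᵐ ω ∂P, IsClosed (Prod.mk ω ⁻¹' (A ×ˢ closure G)) := .of_forall fun ω => by
    by_cases hω : ω ∈ A <;> simp [hω]
  calc μ (skewProduct θ T ⁻¹' (A ×ˢ G))
    _ ≤ μ (skewProduct θ T ⁻¹' (A ×ˢ G) ∪ Eᶜ) := measure_mono subset_union_left
    _ ≤ m (skewProduct θ T ⁻¹' (A ×ˢ G) ∪ Eᶜ) :=
      hle _ ((((hθ.comp measurable_fst).prodMk hT) (hA.prod hG.measurableSet)).union hE.compl) hopen
    _ ≤ m (skewProduct θ T ⁻¹' (A ×ˢ G)) + m Eᶜ :=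
      addContent_union_le isSetRing_univ (mem_univ _) (mem_univ _)
    _ = m (A ×ˢ G) := by rw [hnull, add_zero, hinv]
    _ ≤ m (A ×ˢ closure G) := addContent_mono_univ m (prod_mono_right subset_closure)
    _ ≤ μ (A ×ˢ closure G) := addContent_le_measure_of_ae_isClosed huniv hle
      (hA.prod isClosed_closure.measurableSet) hclosed

theorem exists_mem_invariantMeasures_forall_isClosed_le [IsFiniteMeasure P]
    [TopologicalSpace.MetrizableSpace X] [CompactSpace X] [Nonempty X] [BorelSpace X]
    (hθ : MeasurePreserving θ P P) (hT : Measurable fun p : Ω × X => T p.1 p.2)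
    (hE : MeasurableSet E) (hcl : ∀ᵐ ω ∂P, IsClosed (fiber E ω))
    (hTc : ∀ᵐ ω ∂P, ContinuousOn (T ω) (fiber E ω))
    (hm : ∀ A, MeasurableSet A → m (Prod.fst ⁻¹' A) = P A) (hnull : m Eᶜ = 0)
    (hinv : ∀ S, m (skewProduct θ T ⁻¹' S) = m S) :
    ∃ μ ∈ invariantMeasures P θ T E, ∀ S, MeasurableSet S →
      (∀ᵐ ω ∂P, IsClosed (Prod.mk ω ⁻¹' S)) → m S ≤ μ S := by
  obtain ⟨μ, hfst, hle⟩ := exists_measure_map_fst_eq_forall_le_addContent m hm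
  have hΦ : Measurable (skewProduct θ T) := (hθ.measurable.comp measurable_fst).prodMk hT
  have hfinite : IsFiniteMeasure μ :=
    (Measure.isFiniteMeasure_map_iff measurable_fst.aemeasurable).1 (hfst ▸ inferInstance)
  have huniv : μ univ = m univ := by
    rw [← preimage_univ (f := Prod.fst), ← Measure.map_apply measurable_fst .univ, hfst, hm _ .univ]
  refine ⟨μ, ⟨hfst, ?_, ?_⟩, fun S hS => addContent_le_measure_of_ae_isClosed huniv hle hS⟩
  · exact nonpos_iff_eq_zero.1
      ((hle _ hE.compl (hcl.mono fun ω hω => hω.isOpen_compl)).trans hnull.le)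
  · refine eq_of_forall_measure_prod_le_closure ?_ fun A G hA hG => ?_
    · rw [Measure.map_map measurable_fst hΦ, hfst, ← hθ.map_eq, ← hfst,
        Measure.map_map hθ.measurable measurable_fst]
      rfl
    · rw [Measure.map_apply hΦ (hA.prod hG.measurableSet)]
      exact measure_preimage_skewProduct_prod_le_closure hθ.measurable hT hE hcl hTc huniv hle
        hnull hinv hA hG

theorem exists_mem_invariantMeasures_upperMean_le [IsFiniteMeasure P]
    [TopologicalSpace.MetrizableSpace X] [CompactSpace X] [Nonempty X] [BorelSpace X]
    (hθ : MeasurePreserving θ P P) (hT : Measurable fun p : Ω × X => T p.1 p.2)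
    (hE : MeasurableSet E) (hne : ∀ᵐ ω ∂P, (fiber E ω).Nonempty)
    (hcl : ∀ᵐ ω ∂P, IsClosed (fiber E ω)) (hTc : ∀ᵐ ω ∂P, ContinuousOn (T ω) (fiber E ω))
    (hTmap : ∀ᵐ ω ∂P, MapsTo (T ω) (fiber E ω) (fiber E (θ ω))) {S : Set (Ω × X)}
    (hS : MeasurableSet S) (hSc : ∀ᵐ ω ∂P, IsClosed (Prod.mk ω ⁻¹' S)) :
    ∃ μ ∈ invariantMeasures P θ T E, ENNReal.ofReal (upperMean P Prod.fst (skewProduct θ T)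
      (bundleFilter P E) (boundedIndicator S)) ≤ μ S := by
  obtain ⟨m, hmS, hm, hnull, hinv⟩ := exists_addContent_eq_upperMean hθ
    (tendsto_skewProduct_bundleFilter hθ.quasiMeasurePreserving hTmap) (fun _ => rfl)
    (ae_le_map_fst_bundleFilter hne) S
  have hEnull : m Eᶜ = 0 := hnull _ ((compl_compl E).symm ▸ mem_inf_of_right (mem_principal_self E))
  obtain ⟨μ, hμ, hle⟩ := exists_mem_invariantMeasures_forall_isClosed_le hθ hT hE hcl hTc hm hEnull
    hinv
  exact ⟨μ, hμ, hmS ▸ hle S hS hSc⟩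

theorem nonempty_invariantMeasures [IsFiniteMeasure P] [TopologicalSpace.MetrizableSpace X]
    [CompactSpace X] [Nonempty X] [BorelSpace X] (hθ : MeasurePreserving θ P P)
    (hT : Measurable fun p : Ω × X => T p.1 p.2) (hE : MeasurableSet E)
    (hne : ∀ᵐ ω ∂P, (fiber E ω).Nonempty) (hcl : ∀ᵐ ω ∂P, IsClosed (fiber E ω))
    (hTc : ∀ᵐ ω ∂P, ContinuousOn (T ω) (fiber E ω))
    (hTmap : ∀ᵐ ω ∂P, MapsTo (T ω) (fiber E ω) (fiber E (θ ω))) :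
    (invariantMeasures P θ T E).Nonempty :=
  let ⟨μ, hμ, _⟩ := exists_mem_invariantMeasures_upperMean_le hθ hT hE hne hcl hTc hTmap .empty
    (.of_forall fun _ => isClosed_empty)
  ⟨μ, hμ⟩

end InvariantMeasure

section OrbitCapacity

theorem tendsto_div_atTop_nhds_zero_of_bddAbove {b : ℕ → ℝ} (hb : ∀ n, 0 ≤ b n)
    (h : ∀ k : ℕ, BddAbove (range fun n : ℕ => b n - n * (1 / (k + 1 : ℝ)))) :
    Tendsto (fun n => b n / n) atTop (𝓝 0) := by
  refine tendsto_order.2 ⟨fun a ha => .of_forall fun n => ha.trans_le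
    (div_nonneg (hb n) n.cast_nonneg), fun a ha => ?_⟩
  obtain ⟨k, hk⟩ := exists_nat_one_div_lt ha
  obtain ⟨C, hC⟩ := h k
  have hlim : Tendsto (fun n : ℕ => 1 / (k + 1 : ℝ) + C / n) atTop (𝓝 (1 / (k + 1 : ℝ))) := by
    simpa using tendsto_const_nhds.add (tendsto_const_div_atTop_nhds_zero_nat C)
  filter_upwards [hlim.eventually_lt_const hk, eventually_gt_atTop 0] with n hn hpos
  have hpos : (0 : ℝ) < n := Nat.cast_pos.2 hpos
  refine lt_of_le_of_lt ?_ hn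
  rw [div_le_iff₀ hpos, add_mul, div_mul_cancel₀ _ hpos.ne', mul_comm _ (n : ℝ)]
  linarith [hC (mem_range_self n)]

variable {Ω X : Type*} {θ : Ω → Ω} {T : Ω → X → X} {E : Set (Ω × X)} {B : Set X}

theorem itr_eq_snd_iterate_skewProduct (n : ℕ) (ω : Ω) (x : X) :
    itr T θ n ω x = ((skewProduct θ T)^[n] (ω, x)).2 := by
  induction n generalizing ω x with
  | zero => rfl
  | succ n ih => rw [Function.iterate_succ_apply]; exact ih _ _

theorem orbCount_eq_birkhoffSum (n : ℕ) (ω : Ω) (x : X) :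
    (orbCount T θ B n ω x : ℝ) =
      birkhoffSum (skewProduct θ T) ((univ ×ˢ B).indicator 1) n (ω, x) := by
  classical
  rw [orbCount, Nat.card_eq_fintype_card, Fintype.card_subtype, Finset.card_filter, birkhoffSum,
    Finset.sum_range, Nat.cast_sum]
  refine Finset.sum_congr rfl fun i _ => ?_
  simp [indicator_apply, itr_eq_snd_iterate_skewProduct]

theorem exists_bsup_eq_orbCount (n : ℕ) {ω : Ω} (hne : (fiber E ω).Nonempty) :
    ∃ x ∈ fiber E ω, bsup T θ E B n ω = orbCount T θ B n ω x := by
  refine Nat.sSup_mem (s := {m | ∃ x ∈ fiber E ω, m = orbCount T θ B n ω x})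
    ⟨_, hne.some, hne.some_mem, rfl⟩ ⟨n, ?_⟩
  rintro _ ⟨x, -, rfl⟩
  simpa [orbCount] using Nat.card_le_card_of_injective _
    (Subtype.val_injective (p := fun i : Fin n => itr T θ (i : ℕ) ω x ∈ B))

open scoped lp

variable [MeasurableSpace Ω] {P : Measure Ω}

theorem ae_forall_bsup_le_birkhoffSum_add (hθ : Measure.QuasiMeasurePreserving θ P P)
    (hne : ∀ᵐ ω ∂P, (fiber E ω).Nonempty)
    (hTmap : ∀ᵐ ω ∂P, MapsTo (T ω) (fiber E ω) (fiber E (θ ω))) {u : Ω → ℝ}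
    {h : ℓ^∞(Ω × X, ℝ)} (hB : ∀ᶠ p in bundleFilter P E,
      boundedIndicator (univ ×ˢ B) p ≤ u p.1 + h p - h (skewProduct θ T p)) :
    ∀ᵐ ω ∂P, ∀ n, (bsup T θ E B n ω : ℝ) ≤ birkhoffSum θ u n ω + 2 * ‖h‖ := by
  refine ae_all_iff.2 fun n => ?_
  filter_upwards [hne, eventually_bundleFilter.1 (eventually_birkhoffSum_le (π := Prod.fst)
    (tendsto_skewProduct_bundleFilter hθ hTmap) (fun _ => rfl) hB n)] with ω hωne hω
  obtain ⟨x, hx, hxn⟩ := exists_bsup_eq_orbCount (T := T) (θ := θ) (B := B) n hωne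
  have hlower := neg_le_of_abs_le (abs_apply_le_norm h ((skewProduct θ T)^[n] (ω, x)))
  have hupper := le_of_abs_le (abs_apply_le_norm h (ω, x))
  have hsum := hω x hx
  rw [coe_boundedIndicator, ← orbCount_eq_birkhoffSum] at hsum
  rw [hxn]
  linarith

theorem mul_measureReal_not_bddAbove_bsup_sub_le_upperMean [IsFiniteMeasure P]
    (hθ : MeasurePreserving θ P P) (hne : ∀ᵐ ω ∂P, (fiber E ω).Nonempty)
    (hTmap : ∀ᵐ ω ∂P, MapsTo (T ω) (fiber E ω) (fiber E (θ ω))) {ε : ℝ} (hε : 0 ≤ ε) :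
    ε * P.real {ω | ¬BddAbove (range fun n : ℕ => (bsup T θ E B n ω : ℝ) - n * ε)} ≤
      upperMean P Prod.fst (skewProduct θ T) (bundleFilter P E)
        (boundedIndicator (univ ×ˢ B)) := by
  refine le_csInf (nonempty_coboundaryBounds _) ?_
  rintro _ ⟨u, h, hu, hui, hB, rfl⟩
  have hbsup := ae_forall_bsup_le_birkhoffSum_add hθ.quasiMeasurePreserving hne hTmap hB
  have hbelow : ∀ᵐ ω ∂P, ∀ n, -(2 * ‖h‖) ≤ birkhoffSum θ u n ω :=
    hbsup.mono fun ω hω n => neg_le_iff_add_nonneg.2 ((Nat.cast_nonneg _).trans (hω n))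
  refine le_trans (mul_le_mul_of_nonneg_left (ENNReal.toReal_mono (measure_ne_top P _)
    (measure_mono_ae ?_)) hε) (mul_measureReal_not_bddAbove_birkhoffSum_sub_le hθ hu hui hbelow ε)
  filter_upwards [hbsup] with ω hω
  refine mt fun ⟨C, hC⟩ => ⟨C + 2 * ‖h‖, forall_mem_range.2 fun n => ?_⟩
  have hn := hC (mem_range_self n)
  have hconst : birkhoffSum θ (fun ω => u ω - ε) n ω = birkhoffSum θ u n ω - n * ε := by
    simp [birkhoffSum]
  rw [hconst] at hn
  linarith [hω n]

theorem ae_ocap_eq_zero_of_upperMean_nonpos [IsFiniteMeasure P]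
    (hθ : MeasurePreserving θ P P) (hne : ∀ᵐ ω ∂P, (fiber E ω).Nonempty)
    (hTmap : ∀ᵐ ω ∂P, MapsTo (T ω) (fiber E ω) (fiber E (θ ω)))
    (hB : upperMean P Prod.fst (skewProduct θ T) (bundleFilter P E)
      (boundedIndicator (univ ×ˢ B)) ≤ 0) :
    ∀ᵐ ω ∂P, ocap T θ E B ω = 0 := by
  have hbdd : ∀ᵐ ω ∂P, ∀ k : ℕ,
      BddAbove (range fun n : ℕ => (bsup T θ E B n ω : ℝ) - n * (1 / (k + 1 : ℝ))) := by
    refine ae_all_iff.2 fun k => (measureReal_eq_zero_iff (measure_ne_top P _)).1 ?_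
    have hk : (0 : ℝ) < 1 / (k + 1) := Nat.one_div_pos_of_nat
    have hle := (mul_measureReal_not_bddAbove_bsup_sub_le_upperMean (B := B) hθ hne hTmap
      hk.le).trans hB
    exact (nonpos_of_mul_nonpos_right hle hk).antisymm measureReal_nonneg
  filter_upwards [hbdd] with ω hω
  exact (tendsto_div_atTop_nhds_zero_of_bddAbove (fun n => Nat.cast_nonneg _) hω).limsup_eq

variable [TopologicalSpace X] [TopologicalSpace.MetrizableSpace X] [CompactSpace X]
  [MeasurableSpace X] [BorelSpace X]

theorem ae_ocap_eq_zero_of_forall_mem_invariantMeasures [IsFiniteMeasure P] [Nonempty X]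
    (hθ : MeasurePreserving θ P P) (hT : Measurable fun p : Ω × X => T p.1 p.2)
    (hE : MeasurableSet E) (hne : ∀ᵐ ω ∂P, (fiber E ω).Nonempty)
    (hcl : ∀ᵐ ω ∂P, IsClosed (fiber E ω)) (hTc : ∀ᵐ ω ∂P, ContinuousOn (T ω) (fiber E ω))
    (hTmap : ∀ᵐ ω ∂P, MapsTo (T ω) (fiber E ω) (fiber E (θ ω))) (hBc : IsClosed B)
    (hB : ∀ μ ∈ invariantMeasures P θ T E, μ (univ ×ˢ B) = 0) :
    ∀ᵐ ω ∂P, ocap T θ E B ω = 0 := by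
  obtain ⟨μ, hμ, hle⟩ := exists_mem_invariantMeasures_upperMean_le hθ hT hE hne hcl hTc hTmap
    (MeasurableSet.univ.prod hBc.measurableSet) (.of_forall fun ω => by simpa using hBc)
  rw [hB μ hμ] at hle
  exact ae_ocap_eq_zero_of_upperMean_nonpos hθ hne hTmap
    (ENNReal.ofReal_eq_zero.1 (nonpos_iff_eq_zero.1 hle))

end OrbitCapacity

theorem exists_isOpen_subset_measure_frontier_eq_zero {X : Type*} [TopologicalSpace X]
    [TopologicalSpace.PseudoMetrizableSpace X] [MeasurableSpace X] [OpensMeasurableSpace X]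
    (μ : Measure X) [SFinite μ] {x : X} {U : Set X} (hU : IsOpen U) (hx : x ∈ U) :
    ∃ V, IsOpen V ∧ x ∈ V ∧ V ⊆ U ∧ μ (frontier V) = 0 := by
  let _ := TopologicalSpace.pseudoMetrizableSpacePseudoMetric X
  obtain ⟨ε, hε, hεU⟩ := Metric.isOpen_iff.1 hU x hx
  obtain ⟨r, ⟨hr, hrε⟩, hnull⟩ := exists_null_frontier_thickening μ {x} hε
  rw [Metric.thickening_singleton] at hnull
  exact ⟨Metric.ball x r, Metric.isOpen_ball, Metric.mem_ball_self hr,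
    (Metric.ball_subset_ball hrε.le).trans hεU, hnull⟩

theorem stmt18_general {Ω X : Type*} [MeasurableSpace Ω] (P : Measure Ω) [IsFiniteMeasure P]
    [TopologicalSpace X] [TopologicalSpace.MetrizableSpace X] [CompactSpace X]
    [MeasurableSpace X] [BorelSpace X] (θ : Ω → Ω) (hθ : MeasurePreserving θ P P)
    (E : Set (Ω × X)) (hE : MeasurableSet E) (hne : ∀ᵐ ω ∂P, (fiber E ω).Nonempty)
    (hcl : ∀ᵐ ω ∂P, IsClosed (fiber E ω)) (T : Ω → X → X)
    (hT : Measurable fun p : Ω × X => T p.1 p.2)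
    (hTmap : ∀ᵐ ω ∂P, MapsTo (T ω) (fiber E ω) (fiber E (θ ω)))
    (hTc : ∀ᵐ ω ∂P, ContinuousOn (T ω) (fiber E ω))
    (huniq : (invariantMeasures P θ T E).Subsingleton) (x : X) (U : Set X) (hU : IsOpen U)
    (hx : x ∈ U) :
    ∃ V, IsOpen V ∧ x ∈ V ∧ V ⊆ U ∧ ∀ᵐ ω ∂P, ocap T θ E (frontier V) ω = 0 := by
  have : Nonempty X := ⟨x⟩
  obtain ⟨μ, hμ⟩ := nonempty_invariantMeasures hθ hT hE hne hcl hTc hTmap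
  have hfinite : IsFiniteMeasure μ :=
    (Measure.isFiniteMeasure_map_iff measurable_fst.aemeasurable).1 (hμ.1 ▸ inferInstance)
  obtain ⟨V, hV, hxV, hVU, hnull⟩ :=
    exists_isOpen_subset_measure_frontier_eq_zero (μ.map Prod.snd) hU hx
  refine ⟨V, hV, hxV, hVU, ae_ocap_eq_zero_of_forall_mem_invariantMeasures hθ hT hE hne hcl hTc
    hTmap isClosed_frontier fun ν hν => ?_⟩
  rwa [huniq hν hμ, univ_prod, ← Measure.map_apply measurable_snd isClosed_frontier.measurableSet]

theorem stmt18
    {Ω X : Type*} [MeasurableSpace Ω]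
    (P : MeasureTheory.Measure Ω) [MeasureTheory.IsProbabilityMeasure P] [P.IsComplete]
    [MetricSpace X] [CompactSpace X] [MeasurableSpace X] [BorelSpace X]
    (θ : Ω → Ω) (hθ : MeasureTheory.MeasurePreserving θ P P)
    (E : Set (Ω × X)) (hE : MeasurableSet E)
    (hEne : ∀ ω, (fiber E ω).Nonempty) (hEcp : ∀ ω, IsCompact (fiber E ω))
    (T : Ω → X → X) (hTm : Measurable fun p : Ω × X => T p.1 p.2)
    (hTmap : ∀ᵐ ω ∂P, Set.MapsTo (T ω) (fiber E ω) (fiber E (θ ω)))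
    (hTc : ∀ᵐ ω ∂P, ContinuousOn (T ω) (fiber E ω))
    (herg : Ergodic θ P)
    (huniq : ∃! μ : MeasureTheory.Measure (Ω × X),
      MeasureTheory.IsProbabilityMeasure μ ∧ μ.map Prod.fst = P ∧ μ E = 1 ∧
        μ.map (fun p : Ω × X => (θ p.1, T p.1 p.2)) = μ) :
    ∀ (x : X) (U : Set X), IsOpen U → x ∈ U →
      ∃ V : Set X, IsOpen V ∧ x ∈ V ∧ V ⊆ U ∧
        ∀ᵐ ω ∂P, ocap T θ E (frontier V) ω = 0 := by
  exact stmt18_general P θ hθ E hE (.of_forall hEne) (.of_forall fun ω => (hEcp ω).isClosed) T hTm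
    hTmap hTc fun μ hμ ν hν => huniq.unique ((mem_invariantMeasures_iff hE).1 hμ)
      ((mem_invariantMeasures_iff hE).1 hν)
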